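/- arXiv:1104.4360 — 5 statements merged into one kernel-verified Lean document; each statement's English description precedes it below -/
import Mathlib

section
/- Let X be a real random variable with density p, and let ψ be a probability density on ℝ such that ψ(x) = 0 implies p(x) = 0 for almost every x, and such that E[max(log(1/ψ(X)), 0)] < +∞. Then the entropy h(X) = -∫ p(x) log p(x) dx is well-defined as an extended real number in [-∞, +∞) (i.e., the positive part of p log p is integrable), and h(X) ≤ E[log(1/ψ(X))]. -/
open MeasureTheory

/-- The extended-real-valued integral `∫ f dμ`, defined as the difference of the
lintegrals of the positive and negative parts of `f`. -/
noncomputable def eInt {α : Type*} [MeasurableSpace α] (μ : Measure α) (f : α → ℝ) : EReal :=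
  ((∫⁻ x, ENNReal.ofReal (f x) ∂μ) : EReal) - ((∫⁻ x, ENNReal.ofReal (-(f x)) ∂μ) : EReal)

/-!
Convexity of `t ↦ t log t` gives the pointwise Gibbs inequality
`-p log p + p ≤ p log (1 / ψ) + ψ`. Since `∫ ψ ≤ ∫ p` and `∫ ψ` is finite, integrating it gives
`-∫ p log p ≤ ∫ p log (1 / ψ) = E log (1 / ψ(X))`. Both sides may be `-∞`, so the inequality is
rearranged into one between nonnegative functions before it is integrated.
-/

theorem neg_mul_log_add_le_mul_log_one_div_add {a b : ℝ} (ha : 0 ≤ a) (hb : 0 ≤ b)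
    (hab : b = 0 → a = 0) :
    -(a * Real.log a) + a ≤ a * Real.log (1 / b) + b := by
  rcases ha.eq_or_lt with rfl | ha
  · simpa using hb
  have hb : 0 < b := hb.lt_of_ne' fun h => ha.ne' (hab h)
  have hkl : 0 ≤ b * InformationTheory.klFun (a / b) :=
    mul_nonneg hb.le (InformationTheory.klFun_nonneg (by positivity))
  have hkl_eq : b * InformationTheory.klFun (a / b) =
      a * Real.log a - a * Real.log b + b - a := by
    rw [InformationTheory.klFun, Real.log_div ha.ne' hb.ne']
    field_simp
  rw [one_div, Real.log_inv]
  linarith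

theorem ofReal_add_ofReal_neg_add_le {a b u v : ℝ} (hu : 0 ≤ u) (h : a + u ≤ b + v) :
    ENNReal.ofReal a + ENNReal.ofReal (-b) + ENNReal.ofReal u ≤
      ENNReal.ofReal (-a) + ENNReal.ofReal b + ENNReal.ofReal v := by
  simp only [ENNReal.ofReal]
  norm_cast
  simp only [← NNReal.coe_le_coe, NNReal.coe_add, Real.coe_toNNReal', max_eq_left hu]
  linarith [max_zero_sub_max_neg_zero_eq_self a, max_zero_sub_max_neg_zero_eq_self b,
    le_max_left v 0]

theorem coe_ennreal_sub_le_sub_of_add_le_add {a b c d : ENNReal} (hc : c ≠ ⊤)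
    (h : a + d ≤ b + c) : (a : EReal) - b ≤ (c : EReal) - d := by
  rw [EReal.le_sub_iff_add_le (by simp) (by simp [hc]), sub_eq_add_neg, add_right_comm,
    ← sub_eq_add_neg]
  exact EReal.sub_le_of_le_add' (mod_cast h)

section Integral

variable {Ω E : Type*} [MeasurableSpace Ω] [MeasurableSpace E] {P : Measure Ω} {μ : Measure E}

theorem integrable_max_zero_iff {f : E → ℝ} (hf : AEStronglyMeasurable f μ) :
    Integrable (fun x => max (f x) 0) μ ↔ ∫⁻ x, ENNReal.ofReal (f x) ∂μ ≠ ⊤ := by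
  have hf_max : AEStronglyMeasurable (fun x => max (f x) 0) μ := hf.sup aestronglyMeasurable_const
  rw [← lintegral_ofReal_ne_top_iff_integrable hf_max (.of_forall fun x => le_max_right _ _)]
  simp only [ENNReal.ofReal_max, ENNReal.ofReal_zero, zero_le, max_eq_left]

theorem lintegral_ofReal_ne_top_of_le_add {f g v : E → ℝ} (hv : AEMeasurable v μ)
    (hfgv : ∀ᵐ x ∂μ, f x ≤ g x + v x) (hg_fin : ∫⁻ x, ENNReal.ofReal (g x) ∂μ ≠ ⊤)
    (hv_fin : ∫⁻ x, ENNReal.ofReal (v x) ∂μ ≠ ⊤) :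
    ∫⁻ x, ENNReal.ofReal (f x) ∂μ ≠ ⊤ := by
  refine ne_top_of_le_ne_top (ENNReal.add_ne_top.2 ⟨hg_fin, hv_fin⟩) ?_
  rw [← lintegral_add_right' _ hv.ennreal_ofReal]
  exact lintegral_mono_ae <| hfgv.mono fun x hx =>
    (ENNReal.ofReal_le_ofReal hx).trans ENNReal.ofReal_add_le

theorem eInt_le_eInt_of_add_le_add {f g u v : E → ℝ} (hg : AEMeasurable g μ)
    (hv : AEMeasurable v μ) (hu : 0 ≤ᵐ[μ] u) (hle : ∀ᵐ x ∂μ, f x + u x ≤ g x + v x)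
    (hvu : ∫⁻ x, ENNReal.ofReal (v x) ∂μ ≤ ∫⁻ x, ENNReal.ofReal (u x) ∂μ)
    (hg_fin : ∫⁻ x, ENNReal.ofReal (g x) ∂μ ≠ ⊤)
    (hv_fin : ∫⁻ x, ENNReal.ofReal (v x) ∂μ ≠ ⊤) :
    eInt μ f ≤ eInt μ g := by
  refine coe_ennreal_sub_le_sub_of_add_le_add hg_fin
    ((ENNReal.add_le_add_iff_right hv_fin).1 ?_)
  calc
    ∫⁻ x, ENNReal.ofReal (f x) ∂μ + ∫⁻ x, ENNReal.ofReal (-g x) ∂μ +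
          ∫⁻ x, ENNReal.ofReal (v x) ∂μ
      ≤ ∫⁻ x, ENNReal.ofReal (f x) ∂μ + ∫⁻ x, ENNReal.ofReal (-g x) ∂μ +
          ∫⁻ x, ENNReal.ofReal (u x) ∂μ := by gcongr
    _ ≤ ∫⁻ x, (ENNReal.ofReal (f x) + ENNReal.ofReal (-g x) + ENNReal.ofReal (u x)) ∂μ :=
      (add_le_add_left (le_lintegral_add _ _) _).trans (le_lintegral_add _ _)
    _ ≤ ∫⁻ x, (ENNReal.ofReal (-f x) + ENNReal.ofReal (g x) + ENNReal.ofReal (v x)) ∂μ := by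
      refine lintegral_mono_ae ?_
      filter_upwards [hu, hle] with x hux hx using ofReal_add_ofReal_neg_add_le hux hx
    _ = ∫⁻ x, ENNReal.ofReal (-f x) ∂μ + ∫⁻ x, ENNReal.ofReal (g x) ∂μ +
          ∫⁻ x, ENNReal.ofReal (v x) ∂μ := by
      rw [lintegral_add_right' _ hv.ennreal_ofReal, lintegral_add_right' _ hg.ennreal_ofReal]

section Density

variable {X : Ω → E} {p : E → ℝ}

theorem lintegral_ofReal_comp_eq_of_map_eq_withDensity (hX : AEMeasurable X P)
    (hp : AEMeasurable p μ) (hp_nonneg : 0 ≤ᵐ[μ] p)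
    (hmap : P.map X = μ.withDensity fun x => ENNReal.ofReal (p x))
    {φ : E → ℝ} (hφ : AEMeasurable φ μ) :
    ∫⁻ ω, ENNReal.ofReal (φ (X ω)) ∂P = ∫⁻ x, ENNReal.ofReal (p x * φ x) ∂μ := by
  have hφ_map : AEMeasurable φ (P.map X) :=
    hφ.mono_ac (hmap ▸ withDensity_absolutelyContinuous _ _)
  rw [← lintegral_map' hφ_map.ennreal_ofReal hX, hmap,
    lintegral_withDensity_eq_lintegral_mul₀ hp.ennreal_ofReal hφ.ennreal_ofReal]
  refine lintegral_congr_ae ?_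
  filter_upwards [hp_nonneg] with x hx using (ENNReal.ofReal_mul hx).symm

theorem eInt_comp_eq_of_map_eq_withDensity (hX : AEMeasurable X P)
    (hp : AEMeasurable p μ) (hp_nonneg : 0 ≤ᵐ[μ] p)
    (hmap : P.map X = μ.withDensity fun x => ENNReal.ofReal (p x))
    {φ : E → ℝ} (hφ : AEMeasurable φ μ) :
    eInt P (fun ω => φ (X ω)) = eInt μ (fun x => p x * φ x) := by
  have hneg := lintegral_ofReal_comp_eq_of_map_eq_withDensity hX hp hp_nonneg hmap hφ.neg
  simp only [Pi.neg_apply, mul_neg] at hneg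
  rw [eInt, eInt, hneg,
    lintegral_ofReal_comp_eq_of_map_eq_withDensity hX hp hp_nonneg hmap hφ]

theorem lintegral_eq_measure_univ_of_map_eq_withDensity (hX : AEMeasurable X P)
    {p : E → ENNReal} (hmap : P.map X = μ.withDensity p) :
    ∫⁻ x, p x ∂μ = P Set.univ := by
  rw [← setLIntegral_univ, ← withDensity_apply _ .univ, ← hmap,
    Measure.map_apply_of_aemeasurable hX .univ, Set.preimage_univ]

end Density

end Integral

theorem stmt_0_general
    {Ω E : Type*} [MeasurableSpace Ω] [MeasurableSpace E] {P : Measure Ω} {μ : Measure E}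
    {X : Ω → E} (hX : AEMeasurable X P)
    {p ψ : E → ℝ} (hp : AEMeasurable p μ) (hp_nonneg : 0 ≤ᵐ[μ] p)
    (hmap : P.map X = μ.withDensity fun x => ENNReal.ofReal (p x))
    (hψ : AEMeasurable ψ μ) (hψ_nonneg : 0 ≤ᵐ[μ] ψ)
    (hψ_fin : ∫⁻ x, ENNReal.ofReal (ψ x) ∂μ ≠ ⊤)
    (hψ_le : ∫⁻ x, ENNReal.ofReal (ψ x) ∂μ ≤ P Set.univ)
    (hzero : ∀ᵐ x ∂μ, ψ x = 0 → p x = 0)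
    (hlog : Integrable (fun ω => max (Real.log (1 / ψ (X ω))) 0) P) :
    Integrable (fun x => max (-(p x * Real.log (p x))) 0) μ ∧
      eInt μ (fun x => -(p x * Real.log (p x))) ≤ eInt P (fun ω => Real.log (1 / ψ (X ω))) := by
  have hlogψ : AEMeasurable (fun x => Real.log (1 / ψ x)) μ := (hψ.const_div 1).log
  have hent : AEMeasurable (fun x => -(p x * Real.log (p x))) μ := (hp.mul hp.log).neg
  have gibbs : ∀ᵐ x ∂μ,
      -(p x * Real.log (p x)) + p x ≤ p x * Real.log (1 / ψ x) + ψ x := by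
    filter_upwards [hp_nonneg, hψ_nonneg, hzero] with x hpx hψx hx
      using neg_mul_log_add_le_mul_log_one_div_add hpx hψx hx
  have hcross_fin : ∫⁻ x, ENNReal.ofReal (p x * Real.log (1 / ψ x)) ∂μ ≠ ⊤ := by
    rw [← lintegral_ofReal_comp_eq_of_map_eq_withDensity hX hp hp_nonneg hmap hlogψ]
    refine ne_top_of_le_ne_top hlog.lintegral_lt_top.ne (lintegral_mono fun ω => ?_)
    exact ENNReal.ofReal_le_ofReal (le_max_left _ _)
  constructor
  · refine (integrable_max_zero_iff hent.aestronglyMeasurable).2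
      (lintegral_ofReal_ne_top_of_le_add hψ ?_ hcross_fin hψ_fin)
    filter_upwards [gibbs, hp_nonneg] with x hx hpx using (le_add_of_nonneg_right hpx).trans hx
  · rw [eInt_comp_eq_of_map_eq_withDensity hX hp hp_nonneg hmap hlogψ]
    exact eInt_le_eInt_of_add_le_add (hp.mul hlogψ) hψ hp_nonneg gibbs
      (hψ_le.trans_eq (lintegral_eq_measure_univ_of_map_eq_withDensity hX hmap).symm)
      hcross_fin hψ_fin

/-- **Proposition 2.1.** If `X` has density `p`, `ψ` is a probability density on `ℝ` with
`ψ(x) = 0 ⟹ p(x) = 0` a.e. and `E log⁺(1/ψ(X)) < ∞`, then the entropy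
`h(X) = -∫ p log p` is well defined in `[-∞, +∞)` (the positive part of `-p log p`,
i.e. the negative part of `p log p`, is integrable), and `h(X) ≤ E log(1/ψ(X))`. -/
theorem stmt_0
    {Ω : Type*} [MeasurableSpace Ω] (P : Measure Ω) [IsProbabilityMeasure P]
    (X : Ω → ℝ) (hX : Measurable X)
    (p ψ : ℝ → ℝ) (hpm : Measurable p) (hpnn : ∀ x, 0 ≤ p x)
    (hpd : Measure.map X P = volume.withDensity (fun x => ENNReal.ofReal (p x)))
    (hψm : Measurable ψ) (hψnn : ∀ x, 0 ≤ ψ x)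
    (hψ1 : ∫⁻ x, ENNReal.ofReal (ψ x) = 1)
    (hzero : ∀ᵐ x ∂(volume : Measure ℝ), ψ x = 0 → p x = 0)
    (hlog : Integrable (fun ω => max (Real.log (1 / ψ (X ω))) 0) P) :
    Integrable (fun x => max (-(p x * Real.log (p x))) 0) volume ∧
      eInt volume (fun x => -(p x * Real.log (p x)))
        ≤ eInt P (fun ω => Real.log (1 / ψ (X ω))) :=
  stmt_0_general hX.aemeasurable hpm.aemeasurable (.of_forall hpnn) hpd hψm.aemeasurable
    (.of_forall hψnn) (by simp [hψ1]) (by simp [hψ1]) hzero hlog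
end

section
/- Let Z be a Gaussian random variable with law N(a, σ²), where a ∈ ℝ and σ > 0, and let X be any real random variable. Then the relative entropy D(X‖Z) is finite if and only if X has a density p, E[X²] < +∞, and the entropy h(X) = -∫ p(x) log p(x) dx is finite. -/
open MeasureTheory
open scoped Classical

/-- Relative entropy (Kullback-Leibler divergence) `D(μ‖ν) = ∫ log (dμ/dν) dμ` if
`μ ≪ ν`, and `+∞` otherwise. -/
noncomputable def klDivE {α : Type*} [MeasurableSpace α] (μ ν : Measure α) : EReal :=
  if μ ≪ ν then eInt μ (fun x => Real.log ((μ.rnDeriv ν x).toReal)) else ⊤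

/-!
The log-likelihood ratios satisfy `log dμ/dx = log dμ/dγ + log dγ/dx` for a Gaussian `γ`, and
`log dγ/dx` is a quadratic polynomial, so once `μ` has a second moment, finiteness of the relative
entropy and of the differential entropy are equivalent. That finite relative entropy forces a
second moment follows from the Young inequality `t s ≤ (t log t + 1 - t) + (exp s - 1)` with
`t = dμ/dγ` and `s = c x ^ 2`: by Fernique's theorem `exp (c x ^ 2)` is `γ`-integrable for small
`c > 0`.
-/

open ProbabilityTheory InformationTheory Real
open scoped ENNReal NNReal

lemma coe_ennreal_sub_ne_top_and_ne_bot_iff (x y : ℝ≥0∞) :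
    ((x : EReal) - y ≠ ⊤ ∧ (x : EReal) - y ≠ ⊥) ↔ x ≠ ⊤ ∧ y ≠ ⊤ := by
  cases x <;> cases y <;> simp [sub_eq_add_neg, EReal.add_eq_bot_iff, EReal.add_ne_top]

lemma enorm_eq_ofReal_add_ofReal_neg (x : ℝ) :
    ‖x‖ₑ = ENNReal.ofReal x + ENNReal.ofReal (-x) := by
  rcases le_total 0 x with hx | hx
  · rw [enorm_eq_ofReal hx, ENNReal.ofReal_of_nonpos (neg_nonpos.2 hx), add_zero]
  · rw [← enorm_neg, enorm_eq_ofReal (neg_nonneg.2 hx), ENNReal.ofReal_of_nonpos hx, zero_add]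

lemma mul_le_klFun_add_exp_sub_one (s : ℝ) {t : ℝ} (ht : 0 ≤ t) :
    t * s ≤ klFun t + (exp s - 1) := by
  rw [klFun_apply]
  rcases ht.eq_or_lt with rfl | ht
  · simpa using (exp_pos s).le
  · have h := add_one_le_exp (s - log t)
    rw [exp_sub, exp_log ht, le_div_iff₀ ht] at h
    linarith

section Measure

variable {α : Type*} [MeasurableSpace α] {μ ν ρ : Measure α}

lemma integrable_iff_lintegral_ofReal_ne_top {f : α → ℝ} (hf : AEMeasurable f μ) :
    Integrable f μ ↔
      ∫⁻ x, ENNReal.ofReal (f x) ∂μ ≠ ⊤ ∧ ∫⁻ x, ENNReal.ofReal (-f x) ∂μ ≠ ⊤ := by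
  rw [Integrable, and_iff_right hf.aestronglyMeasurable, hasFiniteIntegral_iff_enorm,
    lt_top_iff_ne_top, ← ENNReal.add_ne_top, ← lintegral_add_left' hf.ennreal_ofReal]
  simp only [enorm_eq_ofReal_add_ofReal_neg]

lemma eInt_ne_top_and_ne_bot_iff {f : α → ℝ} (hf : AEMeasurable f μ) :
    (eInt μ f ≠ ⊤ ∧ eInt μ f ≠ ⊥) ↔ Integrable f μ := by
  rw [integrable_iff_lintegral_ofReal_ne_top hf]
  exact coe_ennreal_sub_ne_top_and_ne_bot_iff _ _

lemma klDivE_ne_top_and_ne_bot_iff :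
    (klDivE μ ν ≠ ⊤ ∧ klDivE μ ν ≠ ⊥) ↔ μ ≪ ν ∧ Integrable (llr μ ν) μ := by
  by_cases hμν : μ ≪ ν
  · rw [klDivE, if_pos hμν, and_iff_right hμν]
    exact eInt_ne_top_and_ne_bot_iff (measurable_llr μ ν).aemeasurable
  · simp [klDivE, hμν]

lemma integrable_of_integrable_exp_abs_of_integrable_llr [IsFiniteMeasure μ] [IsFiniteMeasure ν]
    (hμν : μ ≪ ν) {f : α → ℝ} (hf : AEStronglyMeasurable f ν)
    (hexp : Integrable (fun x ↦ exp |f x|) ν) (hllr : Integrable (llr μ ν) μ) :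
    Integrable f μ := by
  rw [← integrable_rnDeriv_smul_iff hμν]
  have hbound : Integrable
      (fun x ↦ klFun (μ.rnDeriv ν x).toReal + (exp |f x| - 1)) ν :=
    ((integrable_klFun_rnDeriv_iff hμν).2 hllr).add (hexp.sub (integrable_const 1))
  refine hbound.mono' ?_ (.of_forall fun x ↦ ?_)
  · exact (μ.measurable_rnDeriv ν).ennreal_toReal.aestronglyMeasurable.smul hf
  · rw [norm_smul, norm_of_nonneg ENNReal.toReal_nonneg]
    exact mul_le_klFun_add_exp_sub_one _ ENNReal.toReal_nonneg

lemma llr_ae_eq_add [SigmaFinite μ] [SigmaFinite ν] [SigmaFinite ρ] (hμν : μ ≪ ν) (hνρ : ν ≪ ρ) :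
    llr μ ρ =ᵐ[μ] llr μ ν + llr ν ρ := by
  have hμρ := hμν.trans hνρ
  filter_upwards [hμρ.ae_le (Measure.rnDeriv_mul_rnDeriv hμν), exp_llr_of_ac μ ρ hμρ,
    exp_llr_of_ac μ ν hμν, hμν.ae_le (exp_llr_of_ac ν ρ hνρ)] with x hmul hexp_μρ hexp_μν hexp_νρ
  refine exp_injective ?_
  rw [Pi.add_apply, exp_add, hexp_μρ, hexp_μν, hexp_νρ, ← ENNReal.toReal_mul, ← hmul, Pi.mul_apply]

lemma integrable_llr_iff_of_integrable_llr [SigmaFinite μ] [SigmaFinite ν] [SigmaFinite ρ]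
    (hμν : μ ≪ ν) (hνρ : ν ≪ ρ) (hllr : Integrable (llr ν ρ) μ) :
    Integrable (llr μ ν) μ ↔ Integrable (llr μ ρ) μ := by
  rw [integrable_congr (llr_ae_eq_add hμν hνρ), integrable_add_iff_integrable_left hllr]

lemma absolutelyContinuous_and_integrable_llr_iff_exists_density [SigmaFinite μ] [SigmaFinite ν] :
    μ ≪ ν ∧ Integrable (llr μ ν) μ ↔
      ∃ p : α → ℝ, Measurable p ∧ (∀ x, 0 ≤ p x) ∧
        μ = ν.withDensity (fun x ↦ ENNReal.ofReal (p x)) ∧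
        Integrable (fun x ↦ p x * log (p x)) ν := by
  constructor
  · rintro ⟨hμν, hllr⟩
    refine ⟨fun x ↦ (μ.rnDeriv ν x).toReal, (μ.measurable_rnDeriv ν).ennreal_toReal,
      fun _ ↦ ENNReal.toReal_nonneg, ?_, (integrable_rnDeriv_mul_log_iff hμν).2 hllr⟩
    rw [withDensity_congr_ae (ofReal_toReal_ae_eq (μ.rnDeriv_lt_top ν)),
      Measure.withDensity_rnDeriv_eq μ ν hμν]
  · rintro ⟨p, hp_meas, hp_nonneg, hp, hint⟩
    have hμν : μ ≪ ν := hp ▸ withDensity_absolutelyContinuous _ _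
    have hrn : μ.rnDeriv ν =ᵐ[ν] fun x ↦ ENNReal.ofReal (p x) :=
      hp ▸ ν.rnDeriv_withDensity hp_meas.ennreal_ofReal
    refine ⟨hμν, (integrable_rnDeriv_mul_log_iff hμν).1 (hint.congr ?_)⟩
    filter_upwards [hrn] with x hx
    rw [hx, ENNReal.toReal_ofReal (hp_nonneg x)]

end Measure

section Gaussian

lemma memLp_two_of_integrable_llr_of_isGaussian {E : Type*} [NormedAddCommGroup E]
    [NormedSpace ℝ E] [CompleteSpace E] [SecondCountableTopology E] [MeasurableSpace E]
    [BorelSpace E] {μ ν : Measure E} [IsFiniteMeasure μ] [IsGaussian ν] (hμν : μ ≪ ν)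
    (hllr : Integrable (llr μ ν) μ) :
    MemLp id 2 μ := by
  obtain ⟨c, hc, hexp⟩ := IsGaussian.exists_integrable_exp_sq ν
  have hint : Integrable (fun x ↦ c * ‖x‖ ^ 2) μ := by
    refine integrable_of_integrable_exp_abs_of_integrable_llr hμν (by fun_prop) ?_ hllr
    simpa only [abs_of_nonneg (show 0 ≤ c * ‖_‖ ^ 2 by positivity)] using hexp
  rw [memLp_two_iff_integrable_sq_norm aestronglyMeasurable_id]
  exact (integrable_const_mul_iff hc.ne'.isUnit _).1 hint

variable (m : ℝ) {v : ℝ≥0}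

lemma log_gaussianPDFReal (hv : v ≠ 0) (x : ℝ) :
    log (gaussianPDFReal m v x) = -log √(2 * π * v) - (x - m) ^ 2 / (2 * v) := by
  have hsqrt : √(2 * π * v) ≠ 0 := by positivity
  rw [gaussianPDFReal, log_mul (inv_ne_zero hsqrt) (exp_ne_zero _), log_inv, log_exp]
  ring

lemma llr_gaussianReal_volume (hv : v ≠ 0) :
    llr (gaussianReal m v) volume =ᵐ[volume]
      fun x ↦ -log √(2 * π * v) - (x - m) ^ 2 / (2 * v) := by
  filter_upwards [rnDeriv_gaussianReal m v] with x hx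
  rw [llr, hx, toReal_gaussianPDF, log_gaussianPDFReal m hv]

variable {μ : Measure ℝ} [IsFiniteMeasure μ]

lemma integrable_llr_gaussianReal_volume (hv : v ≠ 0) (hμ : μ ≪ volume) (hsq : MemLp id 2 μ) :
    Integrable (llr (gaussianReal m v) volume) μ := by
  have hvar : Integrable (fun x ↦ (x - m) ^ 2) μ := (hsq.sub (memLp_const m)).integrable_sq
  rw [integrable_congr (hμ.ae_le (llr_gaussianReal_volume m hv))]
  exact (integrable_const _).sub (hvar.div_const _)

lemma absolutelyContinuous_and_integrable_llr_gaussianReal_iff (hv : v ≠ 0) :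
    μ ≪ gaussianReal m v ∧ Integrable (llr μ (gaussianReal m v)) μ ↔
      MemLp id 2 μ ∧ μ ≪ volume ∧ Integrable (llr μ volume) μ := by
  have hGV := gaussianReal_absolutelyContinuous m hv
  have hVG := gaussianReal_absolutelyContinuous' m hv
  constructor
  · rintro ⟨hμG, hllr⟩
    have hμV := hμG.trans hGV
    have hsq := memLp_two_of_integrable_llr_of_isGaussian hμG hllr
    have hG := integrable_llr_gaussianReal_volume m hv hμV hsq
    exact ⟨hsq, hμV, (integrable_llr_iff_of_integrable_llr hμG hGV hG).1 hllr⟩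
  · rintro ⟨hsq, hμV, hllr⟩
    have hμG := hμV.trans hVG
    have hG := integrable_llr_gaussianReal_volume m hv hμV hsq
    exact ⟨hμG, (integrable_llr_iff_of_integrable_llr hμG hGV hG).2 hllr⟩

end Gaussian

/-- **Corollary 2.3.** For a Gaussian `Z ∼ N(a, σ²)` (`σ > 0`) and any real random
variable `X`: `D(X‖Z) < ∞` iff `X` has a density `p` with `E X² < ∞` and finite
entropy `h(X) = -∫ p log p`. -/
theorem stmt_4
    {Ω : Type*} [MeasurableSpace Ω] (P : Measure Ω) [IsProbabilityMeasure P]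
    (X Z : Ω → ℝ) (hX : Measurable X) (hZ : Measurable Z)
    (a σ : ℝ) (hσ : 0 < σ)
    (hZlaw : Measure.map Z P = ProbabilityTheory.gaussianReal a (Real.toNNReal (σ ^ 2))) :
    (klDivE (Measure.map X P) (Measure.map Z P) ≠ ⊤ ∧
      klDivE (Measure.map X P) (Measure.map Z P) ≠ ⊥) ↔
    ∃ p : ℝ → ℝ, Measurable p ∧ (∀ x, 0 ≤ p x) ∧
      Measure.map X P = volume.withDensity (fun x => ENNReal.ofReal (p x)) ∧
      Integrable (fun ω => (X ω) ^ 2) P ∧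
      Integrable (fun x => p x * Real.log (p x)) volume := by
  have : IsProbabilityMeasure (P.map X) := Measure.isProbabilityMeasure_map hX.aemeasurable
  have hv : (σ ^ 2).toNNReal ≠ 0 := (Real.toNNReal_pos.2 (by positivity)).ne'
  have hmoment : MemLp id 2 (P.map X) ↔ Integrable (fun ω ↦ X ω ^ 2) P := by
    rw [memLp_map_measure_iff aestronglyMeasurable_id hX.aemeasurable, Function.id_comp,
      memLp_two_iff_integrable_sq hX.aestronglyMeasurable]
  rw [hZlaw, klDivE_ne_top_and_ne_bot_iff,
    absolutelyContinuous_and_integrable_llr_gaussianReal_iff a hv, hmoment,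
    absolutelyContinuous_and_integrable_llr_iff_exists_density, ← exists_and_left]
  simp only [and_left_comm]
end

section
/- Let ρ₁, ρ₀, ψ be probability densities on ℝ such that ψ(x) = 0 implies ρ₁(x) = ρ₀(x) = 0 for almost every x, let 0 ≤ b ≤ 1, and set p = (1−b)ρ₁ + bρ₀. Then, as extended real numbers, D(p‖ψ) ≥ (1−b)·D(ρ₁‖ψ) − 2/e, where D(p‖ψ) = ∫ p(x) log(p(x)/ψ(x)) dx. -/
open MeasureTheory

/-- Relative entropy `D(p‖ψ) = ∫ p log(p/ψ)` of probability densities on `ℝ`. -/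
noncomputable def relEntD (p ψ : ℝ → ℝ) : EReal :=
  eInt volume (fun x => p x * Real.log (p x / ψ x))

/-!
Set `D(f‖g) = ∫ f log (f / g)`. Monotonicity of the logarithm makes `D(·‖ψ)` superadditive on
nonnegative functions, while scaling by `c` multiplies it by `c` and adds `c log c ∫ f`. Hence
`D((1-b)ρ₁ + bρ₀‖ψ) ≥ (1-b) D(ρ₁‖ψ) + b D(ρ₀‖ψ) - h(b)`, where `h` is the binary entropy. Gibbs'
inequality discards the term in `ρ₀`, and `h(b) ≤ log 2 ≤ 2/e`.

All negative parts involved have finite integral, because `-f log (f / g) ≤ g`; so the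
extended-real arithmetic never meets `∞ - ∞`.
-/

section RealInequalities

variable {s t x y : ℝ}

lemma sub_le_mul_log_div (ht : 0 ≤ t) (hs : 0 ≤ s) (hst : s = 0 → t = 0) :
    t - s ≤ t * Real.log (t / s) := by
  rcases eq_or_ne s 0 with rfl | hs0
  · simp [hst rfl]
  · have klFun_mul_nonneg : 0 ≤ s * InformationTheory.klFun (t / s) :=
      mul_nonneg hs (InformationTheory.klFun_nonneg (div_nonneg ht hs))
    have klFun_mul_eq : s * InformationTheory.klFun (t / s) = t * Real.log (t / s) + s - t := by
      rw [InformationTheory.klFun_apply]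
      field_simp
    linarith

lemma neg_le_mul_log_div (ht : 0 ≤ t) (hs : 0 ≤ s) : -s ≤ t * Real.log (t / s) := by
  rcases eq_or_ne s 0 with rfl | hs0
  · simp
  · linarith [sub_le_mul_log_div ht hs fun h => absurd h hs0]

lemma mul_log_div_le_mul_log_div (hx : 0 ≤ x) (hs : 0 ≤ s) (hxy : x ≤ y) :
    x * Real.log (x / s) ≤ x * Real.log (y / s) := by
  rcases hx.eq_or_lt with rfl | hx
  · simp
  rcases hs.eq_or_lt with rfl | hs
  · simp
  gcongr

lemma mul_log_div_add_mul_log_div_le (hx : 0 ≤ x) (hy : 0 ≤ y) (hs : 0 ≤ s) :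
    x * Real.log (x / s) + y * Real.log (y / s) ≤ (x + y) * Real.log ((x + y) / s) := by
  rw [add_mul]
  exact add_le_add (mul_log_div_le_mul_log_div hx hs (le_add_of_nonneg_right hy))
    (mul_log_div_le_mul_log_div hy hs (le_add_of_nonneg_left hx))

lemma mul_mul_log_mul_div (c : ℝ) (hst : s = 0 → t = 0) :
    c * t * Real.log (c * t / s) = c * (t * Real.log (t / s)) + c * Real.log c * t := by
  rcases eq_or_ne c 0 with rfl | hc
  · simp
  rcases eq_or_ne t 0 with rfl | ht
  · simp
  rw [mul_div_assoc, Real.log_mul hc (div_ne_zero ht (mt hst ht))]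
  ring

lemma binEntropy_le_two_div_exp_one (b : ℝ) : Real.binEntropy b ≤ 2 / Real.exp 1 := by
  have exp_one_mul_log_two_le : Real.exp 1 * Real.log 2 ≤ 2 :=
    Real.exp_one_mul_le_exp.trans_eq (Real.exp_log two_pos)
  calc Real.binEntropy b ≤ Real.log 2 := Real.binEntropy_le_log_two
    _ ≤ 2 / Real.exp 1 := by rwa [le_div_iff₀' (Real.exp_pos 1)]

lemma ofReal_add_add_ofReal_neg_add_ofReal_neg (x y : ℝ) :
    ENNReal.ofReal (x + y) + (ENNReal.ofReal (-x) + ENNReal.ofReal (-y)) =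
      ENNReal.ofReal x + ENNReal.ofReal y + ENNReal.ofReal (-(x + y)) := by
  rw [← ENNReal.toReal_eq_toReal_iff' (by finiteness) (by finiteness)]
  simp only [ENNReal.toReal_add, ENNReal.toReal_ofReal', ENNReal.ofReal_ne_top, ne_eq,
    not_false_eq_true, ENNReal.add_ne_top, and_self]
  linarith [max_zero_sub_eq_self x, max_zero_sub_eq_self y, max_zero_sub_eq_self (x + y)]

end RealInequalities

lemma coe_ennreal_sub_eq_sub_of_add_eq_add {a b c d : ENNReal} (hb : b ≠ ⊤) (hd : d ≠ ⊤)
    (h : a + d = c + b) : (a : EReal) - b = c - d := by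
  have hcoe : (a : EReal) + d = c + b := mod_cast h
  rw [← EReal.coe_ennreal_toReal hb, ← EReal.coe_ennreal_toReal hd] at hcoe ⊢
  calc (a : EReal) - b.toReal = a + d.toReal - d.toReal - b.toReal := by
        rw [EReal.add_sub_cancel_right]
    _ = c + b.toReal - b.toReal - d.toReal := by
        rw [hcoe, sub_eq_add_neg, sub_eq_add_neg, add_right_comm, ← sub_eq_add_neg,
          ← sub_eq_add_neg]
    _ = c - d.toReal := by rw [EReal.add_sub_cancel_right]

section ExtendedIntegral

variable {α : Type*} [MeasurableSpace α] {μ : Measure α} {f g : α → ℝ}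

lemma eInt_mono_ae (hfg : f ≤ᵐ[μ] g) : eInt μ f ≤ eInt μ g := by
  refine EReal.sub_le_sub (mod_cast lintegral_mono_ae ?_) (mod_cast lintegral_mono_ae ?_)
  · filter_upwards [hfg] with x hx using ENNReal.ofReal_le_ofReal hx
  · filter_upwards [hfg] with x hx using ENNReal.ofReal_le_ofReal (neg_le_neg hx)

lemma eInt_congr_ae (hfg : f =ᵐ[μ] g) : eInt μ f = eInt μ g :=
  (eInt_mono_ae hfg.le).antisymm (eInt_mono_ae hfg.symm.le)

lemma eInt_eq_integral (hf : Integrable f μ) : eInt μ f = ((∫ x, f x ∂μ : ℝ) : EReal) := by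
  have hf_neg : ∫⁻ x, ENNReal.ofReal (-f x) ∂μ ≠ ⊤ := hf.neg.lintegral_lt_top.ne
  rw [integral_eq_lintegral_pos_part_sub_lintegral_neg_part hf, eInt, EReal.coe_sub,
    EReal.coe_ennreal_toReal hf.lintegral_lt_top.ne, EReal.coe_ennreal_toReal hf_neg]

lemma eInt_const_mul {c : ℝ} (hc : 0 ≤ c) (f : α → ℝ) :
    eInt μ (fun x => c * f x) = c * eInt μ f := by
  have coe_lintegral_const_mul (h : α → ℝ) :
      ((∫⁻ x, ENNReal.ofReal (c * h x) ∂μ : ENNReal) : EReal) =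
        c * ((∫⁻ x, ENNReal.ofReal (h x) ∂μ : ENNReal) : EReal) := by
    simp_rw [ENNReal.ofReal_mul hc]
    rw [lintegral_const_mul' _ _ ENNReal.ofReal_ne_top, EReal.coe_ennreal_mul,
      EReal.coe_ennreal_ofReal, max_eq_left hc]
  simp_rw [eInt, ← mul_neg, coe_lintegral_const_mul]
  rw [EReal.mul_sub_of_nonneg_of_ne_top (mod_cast hc) (EReal.coe_ne_top c)]

lemma lintegral_ofReal_neg_ne_top_of_le (hg : Integrable g μ) (hgf : g ≤ᵐ[μ] f) :
    ∫⁻ x, ENNReal.ofReal (-f x) ∂μ ≠ ⊤ := by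
  refine ne_top_of_le_ne_top hg.neg.lintegral_lt_top.ne (lintegral_mono_ae ?_)
  filter_upwards [hgf] with x hx using ENNReal.ofReal_le_ofReal (neg_le_neg hx)

lemma eInt_add (hf : AEMeasurable f μ) (hg : AEMeasurable g μ)
    (hf_neg : ∫⁻ x, ENNReal.ofReal (-f x) ∂μ ≠ ⊤) (hg_neg : ∫⁻ x, ENNReal.ofReal (-g x) ∂μ ≠ ⊤) :
    eInt μ (fun x => f x + g x) = eInt μ f + eInt μ g := by
  have lintegral_parts :
      ∫⁻ x, ENNReal.ofReal (f x + g x) ∂μ +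
          (∫⁻ x, ENNReal.ofReal (-f x) ∂μ + ∫⁻ x, ENNReal.ofReal (-g x) ∂μ) =
        ∫⁻ x, ENNReal.ofReal (f x) ∂μ + ∫⁻ x, ENNReal.ofReal (g x) ∂μ +
          ∫⁻ x, ENNReal.ofReal (-(f x + g x)) ∂μ := by
    rw [← lintegral_add_left' (by fun_prop), ← lintegral_add_left' (by fun_prop),
      ← lintegral_add_left' (by fun_prop), ← lintegral_add_left' (by fun_prop)]
    simp_rw [ofReal_add_add_ofReal_neg_add_ofReal_neg]
  have sum_neg_ne_top : ∫⁻ x, ENNReal.ofReal (-(f x + g x)) ∂μ ≠ ⊤ := by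
    refine ne_top_of_le_ne_top (ENNReal.add_ne_top.2 ⟨hf_neg, hg_neg⟩) ?_
    rw [← lintegral_add_left' (by fun_prop)]
    exact lintegral_mono fun x => by rw [neg_add]; exact ENNReal.ofReal_add_le
  rw [eInt, eInt, eInt, ← EReal.add_sub_add_comm (by simp) (by simp [hf_neg]),
    ← EReal.coe_ennreal_add, ← EReal.coe_ennreal_add]
  exact coe_ennreal_sub_eq_sub_of_add_eq_add sum_neg_ne_top
    (ENNReal.add_ne_top.2 ⟨hf_neg, hg_neg⟩) lintegral_parts

end ExtendedIntegral

section RelativeEntropy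

variable {α : Type*} [MeasurableSpace α] {μ : Measure α} {f g ψ : α → ℝ}

/-- Relative entropy `D(f‖ψ) = ∫ f log (f / ψ) dμ` of densities with respect to an arbitrary
reference measure `μ`, as an extended real; `relEntD` is the case of Lebesgue measure on `ℝ`. -/
noncomputable def relEnt (μ : Measure α) (f ψ : α → ℝ) : EReal :=
  eInt μ (fun x => f x * Real.log (f x / ψ x))

/-- Probability densities with respect to `μ`, nonnegative almost everywhere. -/
structure IsProbDensity (μ : Measure α) (ρ : α → ℝ) : Prop where
  aemeasurable : AEMeasurable ρ μ
  nonneg : 0 ≤ᵐ[μ] ρ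
  lintegral_eq_one : ∫⁻ x, ENNReal.ofReal (ρ x) ∂μ = 1

namespace IsProbDensity

lemma integrable (hf : IsProbDensity μ f) : Integrable f μ :=
  (lintegral_ofReal_ne_top_iff_integrable hf.aemeasurable.aestronglyMeasurable hf.nonneg).1
    (by simp [hf.lintegral_eq_one])

lemma integral_eq_one (hf : IsProbDensity μ f) : ∫ x, f x ∂μ = 1 := by
  rw [integral_eq_lintegral_of_nonneg_ae hf.nonneg hf.aemeasurable.aestronglyMeasurable,
    hf.lintegral_eq_one, ENNReal.toReal_one]

end IsProbDensity

lemma neg_ae_le_mul_log_div (hf : 0 ≤ᵐ[μ] f) (hψ : 0 ≤ᵐ[μ] ψ) :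
    (fun x => -ψ x) ≤ᵐ[μ] fun x => f x * Real.log (f x / ψ x) := by
  filter_upwards [hf, hψ] with x hfx hψx using neg_le_mul_log_div hfx hψx

lemma integral_sub_integral_le_relEnt (hf : Integrable f μ) (hf0 : 0 ≤ᵐ[μ] f)
    (hψ : Integrable ψ μ) (hψ0 : 0 ≤ᵐ[μ] ψ) (hfψ : ∀ᵐ x ∂μ, ψ x = 0 → f x = 0) :
    ((∫ x, f x ∂μ - ∫ x, ψ x ∂μ : ℝ) : EReal) ≤ relEnt μ f ψ := by
  have hsub : Integrable (fun x => f x - ψ x) μ := hf.sub hψ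
  rw [← integral_sub hf hψ, ← eInt_eq_integral hsub]
  refine eInt_mono_ae ?_
  filter_upwards [hf0, hψ0, hfψ] with x hfx hψx hx using sub_le_mul_log_div hfx hψx hx

lemma relEnt_nonneg (hf : IsProbDensity μ f) (hψ : IsProbDensity μ ψ)
    (hfψ : ∀ᵐ x ∂μ, ψ x = 0 → f x = 0) : 0 ≤ relEnt μ f ψ := by
  simpa [hf.integral_eq_one, hψ.integral_eq_one] using
    integral_sub_integral_le_relEnt hf.integrable hf.nonneg hψ.integrable hψ.nonneg hfψ

lemma relEnt_add_relEnt_le (hf : AEMeasurable f μ) (hf0 : 0 ≤ᵐ[μ] f)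
    (hg : AEMeasurable g μ) (hg0 : 0 ≤ᵐ[μ] g) (hψ : Integrable ψ μ) (hψ0 : 0 ≤ᵐ[μ] ψ) :
    relEnt μ f ψ + relEnt μ g ψ ≤ relEnt μ (fun x => f x + g x) ψ := by
  have hψm := hψ.aemeasurable
  rw [relEnt, relEnt, ← eInt_add (by fun_prop) (by fun_prop)
    (lintegral_ofReal_neg_ne_top_of_le hψ.neg (neg_ae_le_mul_log_div hf0 hψ0))
    (lintegral_ofReal_neg_ne_top_of_le hψ.neg (neg_ae_le_mul_log_div hg0 hψ0))]
  refine eInt_mono_ae ?_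
  filter_upwards [hf0, hg0, hψ0] with x hfx hgx hψx
    using mul_log_div_add_mul_log_div_le hfx hgx hψx

lemma relEnt_const_mul {c : ℝ} (hc : 0 ≤ c) (hf : Integrable f μ) (hf0 : 0 ≤ᵐ[μ] f)
    (hψ : Integrable ψ μ) (hψ0 : 0 ≤ᵐ[μ] ψ) (hfψ : ∀ᵐ x ∂μ, ψ x = 0 → f x = 0) :
    relEnt μ (fun x => c * f x) ψ =
      c * relEnt μ f ψ + ((c * Real.log c * ∫ x, f x ∂μ : ℝ) : EReal) := by
  have hcf : Integrable (fun x => c * Real.log c * f x) μ := hf.const_mul _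
  have scaling : (fun x => c * f x * Real.log (c * f x / ψ x)) =ᵐ[μ]
      fun x => c * (f x * Real.log (f x / ψ x)) + c * Real.log c * f x := by
    filter_upwards [hfψ] with x hx using mul_mul_log_mul_div c hx
  have neg_le : (fun x => c * -ψ x) ≤ᵐ[μ] fun x => c * (f x * Real.log (f x / ψ x)) := by
    filter_upwards [neg_ae_le_mul_log_div hf0 hψ0] with x hx
      using mul_le_mul_of_nonneg_left hx hc
  have hfm := hf.aemeasurable
  have hψm := hψ.aemeasurable
  rw [relEnt, eInt_congr_ae scaling,
    eInt_add (by fun_prop) (by fun_prop)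
      (lintegral_ofReal_neg_ne_top_of_le (hψ.neg.const_mul c) neg_le)
      hcf.neg.lintegral_lt_top.ne,
    eInt_const_mul hc, eInt_eq_integral hcf, integral_const_mul, relEnt]

theorem stmt_13_general {ρ₁ ρ₀ : α → ℝ} (h₁ : IsProbDensity μ ρ₁) (h₀ : IsProbDensity μ ρ₀)
    (hψ : IsProbDensity μ ψ) (hzero : ∀ᵐ x ∂μ, ψ x = 0 → ρ₁ x = 0 ∧ ρ₀ x = 0)
    {b : ℝ} (hb0 : 0 ≤ b) (hb1 : b ≤ 1) :
    relEnt μ (fun x => (1 - b) * ρ₁ x + b * ρ₀ x) ψ ≥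
      ((1 - b : ℝ) : EReal) * relEnt μ ρ₁ ψ - (Real.binEntropy b : EReal) := by
  have hb : 0 ≤ 1 - b := sub_nonneg.2 hb1
  have hzero₁ : ∀ᵐ x ∂μ, ψ x = 0 → ρ₁ x = 0 := hzero.mono fun x hx h => (hx h).1
  have hzero₀ : ∀ᵐ x ∂μ, ψ x = 0 → ρ₀ x = 0 := hzero.mono fun x hx h => (hx h).2
  have scale₁ : relEnt μ (fun x => (1 - b) * ρ₁ x) ψ =
      ((1 - b : ℝ) : EReal) * relEnt μ ρ₁ ψ + (((1 - b) * Real.log (1 - b) : ℝ) : EReal) := by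
    rw [relEnt_const_mul hb h₁.integrable h₁.nonneg hψ.integrable hψ.nonneg hzero₁,
      h₁.integral_eq_one, mul_one]
  have scale₀ : ((b * Real.log b : ℝ) : EReal) ≤ relEnt μ (fun x => b * ρ₀ x) ψ := by
    rw [relEnt_const_mul hb0 h₀.integrable h₀.nonneg hψ.integrable hψ.nonneg hzero₀,
      h₀.integral_eq_one, mul_one]
    exact le_add_of_nonneg_left (mul_nonneg (mod_cast hb0) (relEnt_nonneg h₀ hψ hzero₀))
  have neg_binEntropy : -Real.binEntropy b = (1 - b) * Real.log (1 - b) + b * Real.log b := by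
    rw [Real.binEntropy_eq_negMulLog_add_negMulLog_one_sub, Real.negMulLog, Real.negMulLog]
    ring
  calc ((1 - b : ℝ) : EReal) * relEnt μ ρ₁ ψ - (Real.binEntropy b : EReal)
      = relEnt μ (fun x => (1 - b) * ρ₁ x) ψ + ((b * Real.log b : ℝ) : EReal) := by
        rw [scale₁, sub_eq_add_neg, ← EReal.coe_neg, neg_binEntropy, EReal.coe_add, add_assoc]
    _ ≤ relEnt μ (fun x => (1 - b) * ρ₁ x) ψ + relEnt μ (fun x => b * ρ₀ x) ψ := by gcongr
    _ ≤ relEnt μ (fun x => (1 - b) * ρ₁ x + b * ρ₀ x) ψ :=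
        relEnt_add_relEnt_le (h₁.aemeasurable.const_mul _)
          (h₁.nonneg.mono fun x hx => mul_nonneg hb hx) (h₀.aemeasurable.const_mul _)
          (h₀.nonneg.mono fun x hx => mul_nonneg hb0 hx) hψ.integrable hψ.nonneg

end RelativeEntropy

/-- For probability densities `ρ₁, ρ₀, ψ` on `ℝ` with `{ψ = 0} ⊆ {ρ₁ = 0} ∩ {ρ₀ = 0}`
a.e., `b ∈ [0,1]`, and the mixture `p = (1−b)ρ₁ + bρ₀`:
`D(p‖ψ) ≥ (1−b)D(ρ₁‖ψ) − 2/e`. -/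
theorem stmt_13
    (ρ₁ ρ₀ ψ : ℝ → ℝ)
    (h1m : Measurable ρ₁) (h1nn : ∀ x, 0 ≤ ρ₁ x) (h11 : ∫⁻ x, ENNReal.ofReal (ρ₁ x) = 1)
    (h0m : Measurable ρ₀) (h0nn : ∀ x, 0 ≤ ρ₀ x) (h01 : ∫⁻ x, ENNReal.ofReal (ρ₀ x) = 1)
    (hψm : Measurable ψ) (hψnn : ∀ x, 0 ≤ ψ x) (hψ1 : ∫⁻ x, ENNReal.ofReal (ψ x) = 1)
    (hzero : ∀ᵐ x ∂(volume : Measure ℝ), ψ x = 0 → ρ₁ x = 0 ∧ ρ₀ x = 0)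
    (b : ℝ) (hb0 : 0 ≤ b) (hb1 : b ≤ 1) :
    relEntD (fun x => (1 - b) * ρ₁ x + b * ρ₀ x) ψ
      ≥ ((1 - b : ℝ) : EReal) * relEntD ρ₁ ψ - ((2 / Real.exp 1 : ℝ) : EReal) := by
  exact (stmt_13_general ⟨h1m.aemeasurable, .of_forall h1nn, h11⟩
    ⟨h0m.aemeasurable, .of_forall h0nn, h01⟩ ⟨hψm.aemeasurable, .of_forall hψnn, hψ1⟩ hzero
    hb0 hb1).trans' (EReal.sub_le_sub le_rfl (mod_cast binEntropy_le_two_div_exp_one b))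
end

section
/- Let ρ₁ and ρ₀ be probability densities on ℝ with ρ₁(x) ≤ M for almost every x, and with characteristic functions ρ̂₁(t) = ∫ e^{itx} ρ₁(x) dx and ρ̂₀(t) = ∫ e^{itx} ρ₀(x) dx. Suppose there are constants c > 0 and t₀ > 0 such that |ρ̂₁(t)| ≤ e^{-c} and |ρ̂₀(t)| ≤ e^{-c} for all |t| ≥ t₀. Then, for all integers n ≥ k ≥ 2, ∫_{|t| ≥ t₀} |ρ̂₁(t)|^k · |ρ̂₀(t)|^{n−k} dt ≤ 2π M e^{-c(n−2)}. -/
open MeasureTheory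
open scoped Real

/-- The characteristic function (Fourier transform) `ρ̂(t) = ∫ e^{itx} ρ(x) dx` of a
density `ρ` on `ℝ`. -/
noncomputable def chFun (ρ : ℝ → ℝ) (t : ℝ) : ℂ :=
  ∫ x : ℝ, Complex.exp (Complex.I * t * x) * (ρ x : ℂ)

/-!
All but two of the `n` factors are at most `e^{-c}` on the region of integration, which gives the
factor `e^{-c(n-2)}`. What is left is `∫ |ρ̂₁|²`, which by Plancherel's theorem is
`2π ∫ ρ₁² ≤ 2πM ∫ ρ₁ = 2πM`.

Mathlib has Plancherel's theorem for the Fourier transform on `L²`, defined by extension from the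
Schwartz functions. On `L¹ ∩ L²` this agrees almost everywhere with the Fourier integral, because
both have the same pairings with Schwartz functions.
-/

section Plancherel

open scoped FourierTransform SchwartzMap

variable {V E : Type*} [NormedAddCommGroup V] [InnerProductSpace ℝ V] [FiniteDimensional ℝ V]
  [MeasurableSpace V] [BorelSpace V] [NormedAddCommGroup E]

theorem continuous_fourier_of_integrable [NormedSpace ℂ E] {f : V → E} (hf : Integrable f) :
    Continuous (𝓕 f) :=
  VectorFourier.fourierIntegral_continuous Real.continuous_fourierChar
    (innerSL ℝ).continuous₂ hf

theorem integral_fourier_smul_eq_integral_smul_fourier [NormedSpace ℂ E] [CompleteSpace E]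
    {f : V → ℂ} {g : V → E} (hf : Integrable f) (hg : Integrable g) :
    ∫ x, 𝓕 f x • g x = ∫ x, f x • 𝓕 g x := by
  have h := VectorFourier.integral_fourierIntegral_smul_eq_flip (L := innerₗ V)
    Real.continuous_fourierChar (innerSL ℝ).continuous₂ hf hg
  rwa [flip_innerₗ] at h

variable [InnerProductSpace ℂ E] [CompleteSpace E] {f : V → E}

theorem integral_smul_fourier_toLp (hf : Integrable f) (hf₂ : MemLp f 2) (φ : 𝓢(V, ℂ)) :
    ∫ x, φ x • (𝓕 (hf₂.toLp f) : Lp E 2 volume) x = ∫ x, φ x • 𝓕 f x :=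
  calc ∫ x, φ x • (𝓕 (hf₂.toLp f) : Lp E 2 volume) x
      = ∫ x, 𝓕 φ x • hf₂.toLp f x := by
        simp only [← Lp.toTemperedDistribution_apply, ← Lp.fourier_toTemperedDistribution_eq,
          TemperedDistribution.fourier_apply]
    _ = ∫ x, 𝓕 φ x • f x :=
        integral_congr_ae (hf₂.coeFn_toLp.mono fun x hx => congrArg (𝓕 φ x • ·) hx)
    _ = ∫ x, φ x • 𝓕 f x := by
        rw [SchwartzMap.fourier_coe, integral_fourier_smul_eq_integral_smul_fourier φ.integrable hf]

theorem coeFn_fourier_toLp_ae_eq (hf : Integrable f) (hf₂ : MemLp f 2) :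
    (𝓕 (hf₂.toLp f) : Lp E 2 volume) =ᵐ[volume] 𝓕 f := by
  refine ae_eq_of_integral_contDiff_smul_eq ((Lp.memLp _).locallyIntegrable one_le_two)
    (continuous_fourier_of_integrable hf).locallyIntegrable fun φ hφ hφc => ?_
  have hφc' : HasCompactSupport (Complex.ofRealCLM ∘ φ) := hφc.comp_left rfl
  have hφ' : ContDiff ℝ (⊤ : ℕ∞) (Complex.ofRealCLM ∘ φ) := by fun_prop
  simpa using! integral_smul_fourier_toLp hf hf₂ (hφc'.toSchwartzMap hφ')

theorem memLp_two_fourier (hf : Integrable f) (hf₂ : MemLp f 2) : MemLp (𝓕 f) 2 :=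
  (memLp_congr_ae (coeFn_fourier_toLp_ae_eq hf hf₂)).1 (Lp.memLp _)

theorem eLpNorm_two_fourier (hf : Integrable f) (hf₂ : MemLp f 2) :
    eLpNorm (𝓕 f) 2 volume = eLpNorm f 2 volume :=
  calc eLpNorm (𝓕 f) 2 volume
      = ‖(𝓕 (hf₂.toLp f) : Lp E 2 volume)‖ₑ := by
        rw [Lp.enorm_def, eLpNorm_congr_ae (coeFn_fourier_toLp_ae_eq hf hf₂)]
    _ = ‖hf₂.toLp f‖ₑ := by
        rw [enorm_eq_iff_norm_eq, Lp.norm_fourier_eq]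
    _ = eLpNorm f 2 volume := Lp.enorm_toLp hf₂

end Plancherel

section MeasureSpace

variable {α E F : Type*} [MeasurableSpace α] {μ : Measure α} [NormedAddCommGroup E]
  [NormedAddCommGroup F] {f : α → E} {g : α → F}

theorem integral_norm_sq_eq_eLpNorm_toReal_sq (hf : AEStronglyMeasurable f μ) :
    ∫ x, ‖f x‖ ^ 2 ∂μ = (eLpNorm f 2 μ).toReal ^ 2 := by
  have hnonneg : 0 ≤ ∫ x, ‖f x‖ ^ 2 ∂μ := by positivity
  rw [toReal_eLpNorm hf, lpNorm_eq_integral_norm_rpow_toReal two_ne_zero ENNReal.ofNat_ne_top hf]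
  simp only [ENNReal.toReal_ofNat, Real.rpow_ofNat]
  exact_mod_cast (Real.rpow_inv_natCast_pow hnonneg two_ne_zero).symm

theorem ae_norm_sq_le_mul_norm {M : ℝ} (hM : ∀ᵐ x ∂μ, ‖f x‖ ≤ M) :
    ∀ᵐ x ∂μ, ‖f x‖ ^ 2 ≤ M * ‖f x‖ := by
  filter_upwards [hM] with x hx
  rw [sq]
  gcongr

theorem memLp_two_of_integrable_of_ae_norm_le {M : ℝ} (hf : Integrable f μ)
    (hM : ∀ᵐ x ∂μ, ‖f x‖ ≤ M) : MemLp f 2 μ := by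
  rw [memLp_two_iff_integrable_sq_norm hf.aestronglyMeasurable]
  refine (hf.norm.const_mul M).mono' (hf.aestronglyMeasurable.norm.pow 2) ?_
  simpa only [norm_pow, norm_norm] using ae_norm_sq_le_mul_norm hM

theorem integral_norm_sq_le_mul_integral_norm {M : ℝ} (hf : Integrable f μ)
    (hM : ∀ᵐ x ∂μ, ‖f x‖ ≤ M) : ∫ x, ‖f x‖ ^ 2 ∂μ ≤ M * ∫ x, ‖f x‖ ∂μ := by
  rw [← integral_const_mul]
  exact integral_mono_of_nonneg (.of_forall fun _ => by positivity) (hf.norm.const_mul M)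
    (ae_norm_sq_le_mul_norm hM)

variable {a b : ℝ} (k m : ℕ)

theorem ae_norm_pow_mul_norm_pow_le (hfa : ∀ᵐ x ∂μ, ‖f x‖ ≤ a) (hgb : ∀ᵐ x ∂μ, ‖g x‖ ≤ b) :
    ∀ᵐ x ∂μ, ‖f x‖ ^ (k + 2) * ‖g x‖ ^ m ≤ a ^ k * b ^ m * ‖f x‖ ^ 2 := by
  filter_upwards [hfa, hgb] with x hfx hgx
  have ha : 0 ≤ a := (norm_nonneg _).trans hfx
  calc ‖f x‖ ^ (k + 2) * ‖g x‖ ^ m = ‖f x‖ ^ k * ‖g x‖ ^ m * ‖f x‖ ^ 2 := by ring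
    _ ≤ a ^ k * b ^ m * ‖f x‖ ^ 2 := by gcongr

theorem integrable_norm_pow_mul_norm_pow (hf : MemLp f 2 μ) (hg : AEStronglyMeasurable g μ)
    (hfa : ∀ᵐ x ∂μ, ‖f x‖ ≤ a) (hgb : ∀ᵐ x ∂μ, ‖g x‖ ≤ b) :
    Integrable (fun x => ‖f x‖ ^ (k + 2) * ‖g x‖ ^ m) μ := by
  refine ((hf.integrable_norm_pow two_ne_zero).const_mul (a ^ k * b ^ m)).mono'
    ((hf.aestronglyMeasurable.norm.pow _).mul (hg.norm.pow _)) ?_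
  simpa only [norm_mul, norm_pow, norm_norm] using ae_norm_pow_mul_norm_pow_le k m hfa hgb

theorem integral_norm_pow_mul_norm_pow_le (hf : MemLp f 2 μ)
    (hfa : ∀ᵐ x ∂μ, ‖f x‖ ≤ a) (hgb : ∀ᵐ x ∂μ, ‖g x‖ ≤ b) :
    ∫ x, ‖f x‖ ^ (k + 2) * ‖g x‖ ^ m ∂μ ≤ a ^ k * b ^ m * ∫ x, ‖f x‖ ^ 2 ∂μ := by
  rw [← integral_const_mul]
  exact integral_mono_of_nonneg (.of_forall fun _ => by positivity)
    ((hf.integrable_norm_pow two_ne_zero).const_mul _) (ae_norm_pow_mul_norm_pow_le k m hfa hgb)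

end MeasureSpace

section CharacteristicFunction

open scoped FourierTransform

variable {ρ : ℝ → ℝ}

theorem chFun_eq_fourier (ρ : ℝ → ℝ) (t : ℝ) :
    chFun ρ t = 𝓕 (fun x => (ρ x : ℂ)) ((-(2 * π))⁻¹ * t) := by
  rw [chFun, Real.fourier_real_eq_integral_exp_smul]
  congr! 4 with x
  push_cast
  field

theorem continuous_chFun (hρ : Integrable ρ) : Continuous (chFun ρ) := by
  rw [funext (chFun_eq_fourier ρ)]
  exact (continuous_fourier_of_integrable hρ.ofReal).comp (continuous_const_mul _)

theorem memLp_two_chFun (hρ : Integrable ρ) (hρ₂ : MemLp ρ 2) : MemLp (chFun ρ) 2 := by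
  rw [memLp_two_iff_integrable_sq_norm (continuous_chFun hρ).aestronglyMeasurable]
  simp_rw [chFun_eq_fourier]
  exact ((memLp_two_fourier hρ.ofReal hρ₂.ofReal).integrable_norm_pow two_ne_zero).comp_mul_left'
    (by simp [Real.pi_ne_zero])

theorem integral_norm_chFun_sq (hρ : Integrable ρ) (hρ₂ : MemLp ρ 2) :
    ∫ t, ‖chFun ρ t‖ ^ 2 = 2 * π * ∫ x, ‖ρ x‖ ^ 2 := by
  have hplancherel : ∫ ξ, ‖𝓕 (fun x => (ρ x : ℂ)) ξ‖ ^ 2 = ∫ x, ‖(ρ x : ℂ)‖ ^ 2 := by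
    rw [integral_norm_sq_eq_eLpNorm_toReal_sq
        (continuous_fourier_of_integrable hρ.ofReal).aestronglyMeasurable,
      eLpNorm_two_fourier hρ.ofReal hρ₂.ofReal,
      integral_norm_sq_eq_eLpNorm_toReal_sq hρ₂.ofReal.aestronglyMeasurable]
  simp_rw [chFun_eq_fourier]
  rw [Measure.integral_comp_inv_mul_left (fun ξ => ‖𝓕 (fun x => (ρ x : ℂ)) ξ‖ ^ 2), hplancherel,
    abs_neg, abs_of_pos Real.two_pi_pos, smul_eq_mul]
  simp only [Complex.norm_real]

theorem integral_norm_chFun_sq_le {M : ℝ} (hρ : Integrable ρ) (hM : ∀ᵐ x, |ρ x| ≤ M) :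
    ∫ t, ‖chFun ρ t‖ ^ 2 ≤ 2 * π * (M * ∫ x, |ρ x|) := by
  rw [integral_norm_chFun_sq hρ (memLp_two_of_integrable_of_ae_norm_le hρ hM)]
  gcongr
  exact integral_norm_sq_le_mul_integral_norm hρ hM

end CharacteristicFunction

theorem stmt_14_general {E : Type*} [NormedAddCommGroup E] {ρ : ℝ → ℝ} {g : ℝ → E} {S : Set ℝ}
    {M c : ℝ} (hρ : Integrable ρ) (hM : ∀ᵐ x, |ρ x| ≤ M) (hS : MeasurableSet S)
    (hg : AEStronglyMeasurable g (volume.restrict S))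
    (hρc : ∀ t ∈ S, ‖chFun ρ t‖ ≤ Real.exp (-c)) (hgc : ∀ t ∈ S, ‖g t‖ ≤ Real.exp (-c))
    {n k : ℕ} (hk : 2 ≤ k) (hkn : k ≤ n) :
    IntegrableOn (fun t => ‖chFun ρ t‖ ^ k * ‖g t‖ ^ (n - k)) S ∧
      ∫ t in S, ‖chFun ρ t‖ ^ k * ‖g t‖ ^ (n - k)
        ≤ 2 * π * (M * ∫ x, |ρ x|) * Real.exp (-(c * ((n : ℝ) - 2))) := by
  obtain ⟨j, rfl⟩ := Nat.exists_eq_add_of_le' hk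
  obtain ⟨m, rfl⟩ := Nat.exists_eq_add_of_le hkn
  rw [Nat.add_sub_cancel_left]
  have hchFun : MemLp (chFun ρ) 2 :=
    memLp_two_chFun hρ (memLp_two_of_integrable_of_ae_norm_le hρ hM)
  have hρc' := ae_restrict_of_forall_mem (μ := volume) hS hρc
  have hgc' := ae_restrict_of_forall_mem (μ := volume) hS hgc
  refine ⟨integrable_norm_pow_mul_norm_pow j m (hchFun.restrict S) hg hρc' hgc', ?_⟩
  have hexp : Real.exp (-c) ^ j * Real.exp (-c) ^ m
      = Real.exp (-(c * (((j + 2 + m : ℕ) : ℝ) - 2))) := by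
    rw [← pow_add, ← Real.exp_nat_mul]
    push_cast
    ring_nf
  calc ∫ t in S, ‖chFun ρ t‖ ^ (j + 2) * ‖g t‖ ^ m
      ≤ Real.exp (-c) ^ j * Real.exp (-c) ^ m * ∫ t in S, ‖chFun ρ t‖ ^ 2 :=
        integral_norm_pow_mul_norm_pow_le j m (hchFun.restrict S) hρc' hgc'
    _ ≤ Real.exp (-c) ^ j * Real.exp (-c) ^ m * (2 * π * (M * ∫ x, |ρ x|)) := by
        gcongr
        exact (setIntegral_le_integral (hchFun.integrable_norm_pow two_ne_zero)
          (.of_forall fun _ => by positivity)).trans (integral_norm_chFun_sq_le hρ hM)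
    _ = 2 * π * (M * ∫ x, |ρ x|) * Real.exp (-(c * (((j + 2 + m : ℕ) : ℝ) - 2))) := by
        rw [hexp, mul_comm]

/-- **Lemma 3.2 (main estimate).** Let `ρ₁, ρ₀` be probability densities on `ℝ` with
`ρ₁ ≤ M` a.e., whose characteristic functions satisfy `|ρ̂₁(t)| ≤ e^{-c}` and
`|ρ̂₀(t)| ≤ e^{-c}` for `|t| ≥ t₀`. Then for all `n ≥ k ≥ 2`:
`∫_{|t| ≥ t₀} |ρ̂₁(t)|^k |ρ̂₀(t)|^{n−k} dt ≤ 2π M e^{-c(n−2)}`. -/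
theorem stmt_14
    (ρ₁ ρ₀ : ℝ → ℝ) (M : ℝ)
    (h1m : Measurable ρ₁) (h1nn : ∀ x, 0 ≤ ρ₁ x) (h11 : ∫⁻ x, ENNReal.ofReal (ρ₁ x) = 1)
    (h0m : Measurable ρ₀) (h0nn : ∀ x, 0 ≤ ρ₀ x) (h01 : ∫⁻ x, ENNReal.ofReal (ρ₀ x) = 1)
    (hM : ∀ᵐ x ∂(volume : Measure ℝ), ρ₁ x ≤ M)
    (c t₀ : ℝ) (hc : 0 < c) (ht₀ : 0 < t₀)
    (h1b : ∀ t : ℝ, t₀ ≤ |t| → ‖chFun ρ₁ t‖ ≤ Real.exp (-c))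
    (h0b : ∀ t : ℝ, t₀ ≤ |t| → ‖chFun ρ₀ t‖ ≤ Real.exp (-c)) :
    ∀ n k : ℕ, 2 ≤ k → k ≤ n →
      ∫ t in {t : ℝ | t₀ ≤ |t|}, ‖chFun ρ₁ t‖ ^ k * ‖chFun ρ₀ t‖ ^ (n - k)
        ≤ 2 * π * M * Real.exp (-(c * ((n : ℝ) - 2))) := by
  have hρ₁ : Integrable ρ₁ := (lintegral_ofReal_ne_top_iff_integrable
    h1m.aestronglyMeasurable (.of_forall h1nn)).1 (h11 ▸ ENNReal.one_ne_top)
  have hρ₀ : Integrable ρ₀ := (lintegral_ofReal_ne_top_iff_integrable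
    h0m.aestronglyMeasurable (.of_forall h0nn)).1 (h01 ▸ ENNReal.one_ne_top)
  have hmass : ∫ x, |ρ₁ x| = 1 := by
    simp [abs_of_nonneg (h1nn _), integral_eq_lintegral_of_nonneg_ae (.of_forall h1nn)
      h1m.aestronglyMeasurable, h11]
  intro n k hk hkn
  have hbound := (stmt_14_general hρ₁ (by simpa only [abs_of_nonneg (h1nn _)] using hM)
    (measurableSet_le measurable_const continuous_abs.measurable)
    (continuous_chFun hρ₀).aestronglyMeasurable h1b h0b hk hkn).2
  rwa [hmass, mul_one] at hbound
end

section
/- For every ε ∈ (0,1] there is a constant C_ε > 0, depending only on ε, with the following property: for all real random variables X with density p and Z with density ψ such that ψ(x) > 0 for almost every x, the relative entropy satisfies D(X‖Z) ≤ C_ε ∫ |p(x) − ψ(x)|^{1+ε} / ψ(x)^ε dx, as extended real numbers in [0, +∞]. -/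
open MeasureTheory

/-!
For `0 < ε ≤ 1`, the function `klFun t = t log t + 1 - t` is at most `ε⁻¹ |t - 1| ^ (1 + ε)`.
Since `log t ≤ t - 1`, it is at most `(t - 1) log t`. On `[0, 1]` it is therefore at most
`(t - 1) ^ 2`, while for `t ≥ 1` the bounds `ε log t ≤ t ^ ε - 1 ≤ (t - 1) ^ ε` apply.
Taking `t = p / ψ`, multiplying by `ψ` and integrating, the term `p - ψ` contributes nothing
because the two densities have the same mass.
-/

section Pointwise

open InformationTheory (klFun)

lemma klFun_le_sub_one_mul_log {t : ℝ} (ht : 0 < t) : klFun t ≤ (t - 1) * Real.log t := by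
  rw [klFun]
  linarith [Real.log_le_sub_one_of_pos ht]

lemma klFun_le_sub_one_sq {t : ℝ} (ht : 0 ≤ t) : klFun t ≤ (t - 1) ^ 2 := by
  have mul_log_le : t * Real.log t ≤ t * (t - 1) := by
    rcases ht.eq_or_lt with rfl | ht_pos
    · simp
    · exact mul_le_mul_of_nonneg_left (Real.log_le_sub_one_of_pos ht_pos) ht
  rw [klFun]
  linarith

variable {ε : ℝ}

lemma log_le_inv_mul_sub_one_rpow (hε0 : 0 < ε) (hε1 : ε ≤ 1) {t : ℝ} (ht : 1 ≤ t) :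
    Real.log t ≤ ε⁻¹ * (t - 1) ^ ε := by
  have rpow_le : t ^ ε ≤ (t - 1) ^ ε + 1 := by
    simpa using Real.rpow_add_le_add_rpow (sub_nonneg.2 ht) zero_le_one hε0.le hε1
  have ht_pos : 0 < t := by linarith
  rw [le_inv_mul_iff₀ hε0]
  calc ε * Real.log t = Real.log (t ^ ε) := (Real.log_rpow ht_pos ε).symm
    _ ≤ t ^ ε - 1 := Real.log_le_sub_one_of_pos (Real.rpow_pos_of_pos ht_pos ε)
    _ ≤ (t - 1) ^ ε := by linarith

lemma klFun_le_inv_mul_abs_sub_one_rpow (hε0 : 0 < ε) (hε1 : ε ≤ 1) {t : ℝ} (ht : 0 ≤ t) :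
    klFun t ≤ ε⁻¹ * |t - 1| ^ (1 + ε) := by
  rcases le_total t 1 with ht1 | ht1
  · have abs_le_one : |t - 1| ≤ 1 := abs_le.2 ⟨by linarith, by linarith⟩
    calc klFun t ≤ (t - 1) ^ 2 := klFun_le_sub_one_sq ht
      _ = |t - 1| ^ (2 : ℝ) := by rw [Real.rpow_two, sq_abs]
      _ ≤ |t - 1| ^ (1 + ε) :=
        Real.rpow_le_rpow_of_exponent_ge' (abs_nonneg _) abs_le_one (by linarith) (by linarith)
      _ ≤ ε⁻¹ * |t - 1| ^ (1 + ε) :=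
        le_mul_of_one_le_left (by positivity) ((one_le_inv₀ hε0).2 hε1)
  · have ht_sub : 0 ≤ t - 1 := by linarith
    calc klFun t ≤ (t - 1) * Real.log t := klFun_le_sub_one_mul_log (by linarith)
      _ ≤ (t - 1) * (ε⁻¹ * (t - 1) ^ ε) := by
        gcongr
        exact log_le_inv_mul_sub_one_rpow hε0 hε1 ht1
      _ = ε⁻¹ * |t - 1| ^ (1 + ε) := by
        rw [abs_of_nonneg ht_sub, Real.rpow_one_add' ht_sub (by linarith)]
        ring

lemma mul_log_div_le_sub_add (hε0 : 0 < ε) (hε1 : ε ≤ 1) {a b : ℝ} (ha : 0 ≤ a) (hb : 0 < b) :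
    a * Real.log (a / b) ≤ a - b + ε⁻¹ * (|a - b| ^ (1 + ε) / b ^ ε) := by
  have mul_klFun : b * klFun (a / b) = a * Real.log (a / b) + b - a := by
    rw [klFun]
    field_simp
  have mul_rpow : b * |a / b - 1| ^ (1 + ε) = |a - b| ^ (1 + ε) / b ^ ε := by
    rw [div_sub_one hb.ne', abs_div, abs_of_pos hb, Real.div_rpow (abs_nonneg _) hb.le,
      Real.rpow_one_add' hb.le (by linarith)]
    field_simp
  have scaled := mul_le_mul_of_nonneg_left
    (klFun_le_inv_mul_abs_sub_one_rpow hε0 hε1 (div_nonneg ha hb.le)) hb.le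
  rw [mul_klFun, mul_left_comm, mul_rpow] at scaled
  linarith

lemma ofReal_add_ofReal_le {f u v h : ℝ} (hv : 0 ≤ v) (hle : f ≤ u - v + h) :
    ENNReal.ofReal f + ENNReal.ofReal v ≤
      ENNReal.ofReal h + ENNReal.ofReal (-f) + ENNReal.ofReal u := by
  have hf : max f 0 - max (-f) 0 = f := max_zero_sub_max_neg_zero_eq_self f
  calc ENNReal.ofReal f + ENNReal.ofReal v = ENNReal.ofReal (max f 0 + v) := by
        rw [ENNReal.ofReal_add (le_max_right f 0) hv, ENNReal.ofReal_max, ENNReal.ofReal_zero,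
          max_eq_left zero_le]
    _ ≤ ENNReal.ofReal (h + max (-f) 0 + u) := ENNReal.ofReal_le_ofReal (by linarith)
    _ ≤ ENNReal.ofReal h + ENNReal.ofReal (max (-f) 0) + ENNReal.ofReal u :=
        ENNReal.ofReal_add_le.trans (add_le_add_left ENNReal.ofReal_add_le _)
    _ = ENNReal.ofReal h + ENNReal.ofReal (-f) + ENNReal.ofReal u := by
        rw [ENNReal.ofReal_max, ENNReal.ofReal_zero, max_eq_left zero_le]

end Pointwise

section Integral

variable {α : Type*} [MeasurableSpace α] {μ : Measure α}

lemma lintegral_ofReal_le_add_lintegral_ofReal_neg {f u v h : α → ℝ} (hf : AEMeasurable f μ)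
    (hu : AEMeasurable u μ) (hv : 0 ≤ᵐ[μ] v)
    (hv_fin : ∫⁻ x, ENNReal.ofReal (v x) ∂μ ≠ ⊤)
    (huv : ∫⁻ x, ENNReal.ofReal (u x) ∂μ ≤ ∫⁻ x, ENNReal.ofReal (v x) ∂μ)
    (hle : ∀ᵐ x ∂μ, f x ≤ u x - v x + h x) :
    ∫⁻ x, ENNReal.ofReal (f x) ∂μ ≤
      ∫⁻ x, ENNReal.ofReal (h x) ∂μ + ∫⁻ x, ENNReal.ofReal (-f x) ∂μ := by
  refine ENNReal.le_of_add_le_add_right hv_fin ?_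
  calc ∫⁻ x, ENNReal.ofReal (f x) ∂μ + ∫⁻ x, ENNReal.ofReal (v x) ∂μ
      ≤ ∫⁻ x, ENNReal.ofReal (f x) + ENNReal.ofReal (v x) ∂μ := le_lintegral_add _ _
    _ ≤ ∫⁻ x, ENNReal.ofReal (h x) + ENNReal.ofReal (-f x) + ENNReal.ofReal (u x) ∂μ := by
      apply lintegral_mono_ae
      filter_upwards [hv, hle] with x hvx hlex
      exact ofReal_add_ofReal_le hvx hlex
    _ = ∫⁻ x, ENNReal.ofReal (h x) ∂μ + ∫⁻ x, ENNReal.ofReal (-f x) ∂μ +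
          ∫⁻ x, ENNReal.ofReal (u x) ∂μ := by
      rw [lintegral_add_right' _ hu.ennreal_ofReal,
        lintegral_add_right' _ hf.fun_neg.ennreal_ofReal]
    _ ≤ ∫⁻ x, ENNReal.ofReal (h x) ∂μ + ∫⁻ x, ENNReal.ofReal (-f x) ∂μ +
          ∫⁻ x, ENNReal.ofReal (v x) ∂μ := by gcongr

lemma coe_lintegral_ofReal_const_mul {c : ℝ} (hc : 0 ≤ c) (g : α → ℝ) :
    ((∫⁻ x, ENNReal.ofReal (c * g x) ∂μ : ENNReal) : EReal) =
      (c : EReal) * ((∫⁻ x, ENNReal.ofReal (g x) ∂μ : ENNReal) : EReal) := by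
  simp only [ENNReal.ofReal_mul hc]
  rw [lintegral_const_mul' _ _ ENNReal.ofReal_ne_top, EReal.coe_ennreal_mul,
    EReal.coe_ennreal_ofReal, max_eq_left hc]

theorem stmt_15_general {ε : ℝ} (hε0 : 0 < ε) (hε1 : ε ≤ 1) {p ψ : α → ℝ}
    (hp : AEMeasurable p μ) (hp_nonneg : 0 ≤ᵐ[μ] p)
    (hψ : AEMeasurable ψ μ) (hψ_pos : ∀ᵐ x ∂μ, 0 < ψ x)
    (hψ_fin : ∫⁻ x, ENNReal.ofReal (ψ x) ∂μ ≠ ⊤)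
    (hmass : ∫⁻ x, ENNReal.ofReal (p x) ∂μ ≤ ∫⁻ x, ENNReal.ofReal (ψ x) ∂μ) :
    eInt μ (fun x => p x * Real.log (p x / ψ x)) ≤ ((ε⁻¹ : ℝ) : EReal) *
      ((∫⁻ x, ENNReal.ofReal (|p x - ψ x| ^ (1 + ε) / ψ x ^ ε) ∂μ : ENNReal) : EReal) := by
  rw [← coe_lintegral_ofReal_const_mul (inv_nonneg.2 hε0.le)]
  have pointwise_bound : ∀ᵐ x ∂μ, p x * Real.log (p x / ψ x) ≤
      p x - ψ x + ε⁻¹ * (|p x - ψ x| ^ (1 + ε) / ψ x ^ ε) := by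
    filter_upwards [hp_nonneg, hψ_pos] with x hpx hψx
    exact mul_log_div_le_sub_add hε0 hε1 hpx hψx
  apply EReal.sub_le_of_le_add
  exact_mod_cast lintegral_ofReal_le_add_lintegral_ofReal_neg (hp.mul (hp.div hψ).log) hp
    (hψ_pos.mono fun _ => le_of_lt) hψ_fin hmass pointwise_bound

end Integral

/-- **Inequality (6.3), first form.** For every `ε ∈ (0,1]` there is `C_ε > 0` such
that for all random variables `X` with density `p` and `Z` with density `ψ > 0` a.e.:
`D(X‖Z) ≤ C_ε ∫ |p − ψ|^{1+ε} / ψ^ε`. -/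
theorem stmt_15 (ε : ℝ) (hε0 : 0 < ε) (hε1 : ε ≤ 1) :
    ∃ C : ℝ, 0 < C ∧
      ∀ p ψ : ℝ → ℝ,
        Measurable p → (∀ x, 0 ≤ p x) → (∫⁻ x, ENNReal.ofReal (p x)) = 1 →
        Measurable ψ → (∀ x, 0 ≤ ψ x) → (∫⁻ x, ENNReal.ofReal (ψ x)) = 1 →
        (∀ᵐ x ∂(volume : Measure ℝ), 0 < ψ x) →
        relEntD p ψ ≤ (C : EReal) *
          ((∫⁻ x, ENNReal.ofReal (|p x - ψ x| ^ (1 + ε) / ψ x ^ ε)) : EReal) := by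
  exact ⟨ε⁻¹, inv_pos.2 hε0, fun p ψ hp hp0 hp1 hψ _ hψ1 hψ_pos =>
    stmt_15_general hε0 hε1 hp.aemeasurable (.of_forall hp0) hψ.aemeasurable hψ_pos
      (by simp [hψ1]) (hp1.trans hψ1.symm).le⟩
end
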